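/- Let F be a formal group law over a commutative ring R with associated unit q(x,y) and p = q⁻¹. Fix n ≥ 2 and a root α = (i,j), 1 ≤ i < j ≤ n, and let A_α be the generalized divided difference operator on R⟦x₁,…,x_n⟧, i.e., A_α(f) is the unique power series with (x_i − x_j)·A_α(f) = p(x_i,x_j)·f − r_α(p(x_i,x_j)·f), where r_α exchanges x_i and x_j. Then the kernel of A_α is exactly q(x_i,x_j)·R⟦x₁,…,x_n⟧^{r_α}: it is a free module of rank one over the subring of r_α-invariant power series, generated by the unit q(x_i,x_j). -/

import Mathlib

noncomputable section
open MvPowerSeries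

variable {k : Type*} [CommRing k]

/-- Substitution of a family of power series (each with zero constant term) into a
multivariate power series, via the standard coefficient formula. -/
def psSubst {σ τ : Type*} [Fintype σ] [DecidableEq σ]
    (a : σ → MvPowerSeries τ k) (f : MvPowerSeries σ k) : MvPowerSeries τ k :=
  fun e => ∑ d ∈ Finset.Iic (Finsupp.equivFunOnFinite.symm fun _ : σ => e.sum fun _ m => m),
    (MvPowerSeries.coeff d f) * MvPowerSeries.coeff e (∏ i, a i ^ d i)

/-- The automorphism of `k⟦x,y⟧` exchanging the two variables. -/
def swapPS (f : MvPowerSeries (Fin 2) k) : MvPowerSeries (Fin 2) k :=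
  fun d => MvPowerSeries.coeff (Finsupp.equivMapDomain (Equiv.swap 0 1) d) f

/-- A formal group law over `k`. -/
def IsFormalGroupLaw (F : MvPowerSeries (Fin 2) k) : Prop :=
  swapPS F = F ∧
  psSubst ![X 0, 0] F = (X 0 : MvPowerSeries (Fin 2) k) ∧
  psSubst ![0, X 1] F = (X 1 : MvPowerSeries (Fin 2) k) ∧
  psSubst ![psSubst ![(X 0 : MvPowerSeries (Fin 3) k), X 1] F, X 2] F =
    psSubst ![(X 0 : MvPowerSeries (Fin 3) k), psSubst ![(X 1 : MvPowerSeries (Fin 3) k), X 2] F] F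

/-- The formal difference `x [-1] y = F(x, ι(y)) ∈ k⟦x,y⟧`, where `ι` is the formal inverse. -/
def formalDiff (F : MvPowerSeries (Fin 2) k) (ι : PowerSeries k) : MvPowerSeries (Fin 2) k :=
  psSubst ![X 0, psSubst (fun _ : Unit => (X 1 : MvPowerSeries (Fin 2) k)) ι] F


/-- The automorphism of `k⟦x₁,…⟧` induced by a permutation of the variables. -/
def renamePS {σ : Type*} (e : Equiv.Perm σ) (f : MvPowerSeries σ k) : MvPowerSeries σ k :=
  fun d => MvPowerSeries.coeff (Finsupp.equivMapDomain e d) f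

theorem psSubst_eq_subst {σ τ : Type*} [Fintype σ] [DecidableEq σ]
    (a : σ → MvPowerSeries τ k) (ha : ∀ s, constantCoeff (a s) = 0) (f : MvPowerSeries σ k) :
    psSubst a f = subst a f := by
  ext e
  rw [coeff_subst (hasSubst_of_constantCoeff_zero ha)]
  rw [finsum_eq_sum_of_support_subset (s := Finset.Iic
    (Finsupp.equivFunOnFinite.symm fun _ : σ => e.sum fun _ m => m))]
  · simp only [smul_eq_mul]
    change (∑ d ∈ _, _) = _
    refine Finset.sum_congr rfl fun d _ => ?_
    rw [Finsupp.prod_fintype _ _ (by simp)]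
  · intro d hd
    by_contra hd'
    apply hd
    simp only [Finset.coe_Iic, Set.mem_Iic, Finsupp.le_def, not_forall, not_le] at hd'
    obtain ⟨s, hs⟩ := hd'
    have hs' : e.degree < d s := by
      exact hs
    dsimp only
    rw [Finsupp.prod_fintype _ _ (by simp), coeff_of_lt_order (d := e), smul_zero]
    rw [← Finset.mul_prod_erase _ _ (Finset.mem_univ s)]
    have h1 : (d s : ℕ∞) ≤ (a s ^ d s).order := le_order_pow_of_constantCoeff_eq_zero _ (ha s)
    calc (e.degree : ℕ∞) < d s := by exact_mod_cast hs'
      _ ≤ (a s ^ d s).order := h1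
      _ ≤ _ := le_self_add
      _ ≤ _ := le_order_mul

theorem X_sub_X_mul_eq_zero {σ : Type*} {i j : σ} (hij : i ≠ j) (g : MvPowerSeries σ k)
    (h : ((X i : MvPowerSeries σ k) - X j) * g = 0) : g = 0 := by
  classical
  have key : ∀ (m : ℕ) (e : σ →₀ ℕ), e j = m → coeff e g = 0 := by
    intro m
    induction m with
    | zero =>
      intro e he
      have := congrArg (coeff (Finsupp.single i 1 + e)) h
      rw [sub_mul, map_sub, map_zero, X, X, coeff_add_monomial_mul, coeff_monomial_mul,
        if_neg, one_mul, sub_zero] at this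
      · exact this
      · intro hle
        have := hle j
        simp [hij, he] at this
    | succ m ih =>
      intro e he
      have := congrArg (coeff (Finsupp.single i 1 + e)) h
      rw [sub_mul, map_sub, map_zero, X, X, coeff_add_monomial_mul, coeff_monomial_mul,
        one_mul, ih (Finsupp.single i 1 + e - Finsupp.single j 1) (by simp [hij, he])] at this
      simpa using this
  ext e
  simpa using key _ e rfl

theorem stmt6 (F : MvPowerSeries (Fin 2) k) (hF : IsFormalGroupLaw F)
    (ι : PowerSeries k) (hι0 : PowerSeries.constantCoeff ι = 0)
    (hι : psSubst ![PowerSeries.X, ι] F = 0)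
    (q p : MvPowerSeries (Fin 2) k)
    (hq : formalDiff F ι = ((X 0 : MvPowerSeries (Fin 2) k) - X 1) * q)
    (hp : p * q = 1)
    (n : ℕ) (hn : 2 ≤ n) (i j : Fin n) (hij : i < j)
    (f g : MvPowerSeries (Fin n) k)
    -- `g = A_α(f)`, the generalized divided difference of `f`
    (hg : ((X i : MvPowerSeries (Fin n) k) - X j) * g =
        psSubst ![(X i : MvPowerSeries (Fin n) k), X j] p * f -
          renamePS (Equiv.swap i j)
            (psSubst ![(X i : MvPowerSeries (Fin n) k), X j] p * f)) :
    -- `f` lies in the kernel of `A_α` iff `f = q(x_i,x_j)·h` for a unique `r_α`-invariant `h`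
    g = 0 ↔ ∃! h : MvPowerSeries (Fin n) k,
      renamePS (Equiv.swap i j) h = h ∧
      f = psSubst ![(X i : MvPowerSeries (Fin n) k), X j] q * h := by
  have hc : ∀ s, constantCoeff ((![X i, X j] : Fin 2 → MvPowerSeries (Fin n) k) s) = 0 := by
    intro s
    fin_cases s <;> simp
  have hPQ : psSubst ![(X i : MvPowerSeries (Fin n) k), X j] p *
      psSubst ![(X i : MvPowerSeries (Fin n) k), X j] q = 1 := by
    rw [psSubst_eq_subst _ hc, psSubst_eq_subst _ hc,
      ← subst_mul (hasSubst_of_constantCoeff_zero hc), hp,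
      ← substAlgHom_apply (hasSubst_of_constantCoeff_zero hc), map_one]
  generalize psSubst ![(X i : MvPowerSeries (Fin n) k), X j] p = P at *
  generalize psSubst ![(X i : MvPowerSeries (Fin n) k), X j] q = Q at *
  constructor
  · rintro rfl
    rw [mul_zero] at hg
    refine ⟨P * f, ⟨(sub_eq_zero.mp hg.symm).symm, ?_⟩, ?_⟩
    · linear_combination (-f) * hPQ
    · rintro h ⟨_, rfl⟩
      linear_combination (-h) * hPQ
  · rintro ⟨h, ⟨h1, h2⟩, _⟩
    have hPf : P * f = h := by
      rw [h2]
      linear_combination h * hPQ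
    rw [hPf, h1, sub_self] at hg
    exact X_sub_X_mul_eq_zero hij.ne g hg
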